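/- arXiv:2405.11436 — 6 statements merged into one kernel-verified Lean document; each statement's English description precedes it below -/
import Mathlib

section
/- Let N, K ≥ 1 be integers, g : Fin N → ℝ, and μ : Fin N → Fin K a labelling, so the sets D_κ := μ⁻¹(κ) partition Fin N. Assume 𝒩_κ := √(Σ_{x ∈ D_κ} g(x)²) > 0 for every κ ∈ Fin K, and set 𝒩 := √(Σ_x g(x)²). Suppose U_κ (κ ∈ Fin K) are unitaries on ℓ²(Fin N) with U_κ e₀ = (1/𝒩_κ)·Σ_{x ∈ D_κ} g(x)·e_x, and V is a unitary on ℓ²(Fin K) with V e₀ = Σ_κ (𝒩_κ/𝒩)·e_κ. Then: (a) the operator (Σ_κ |e_κ⟩⟨e_κ| ⊗ U_κ) ∘ (V ⊗ id) on ℓ²(Fin K × Fin N) maps e₀ ⊗ e₀ to the vector ψ' := (1/𝒩)·Σ_{x} g(x)·(e_{μ(x)} ⊗ e_x); and (b) the permutation operator T of ℓ²(Fin K × Fin N) defined by T(e_κ ⊗ e_x) = e_{κ − μ(x) mod K} ⊗ e_x maps ψ' to e₀ ⊗ ψ_g, where ψ_g := (1/𝒩)·Σ_x g(x)·e_x. 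-/
open scoped BigOperators

/-!
On a product vector, `(∑ κ, |κ⟩⟨κ| ⊗ U κ) (V ⊗ 1)` sends `e ⊗ f` to `∑ κ, (V e) κ • |κ⟩ ⊗ U κ f`.
The amplitude of `|κ⟩ ⊗ |x⟩` is therefore `(𝒩_κ / 𝒩) (g x / 𝒩_κ) = g x / 𝒩` on `D_κ` and `0` off it,
so the outcome is supported on the graph `κ = μ x`. The uncompute permutation shears this graph
onto the slice `κ = 0`, which decouples the label register.
-/

open Matrix
open scoped Kronecker

section ProductVectors

variable {ι m n R : Type*}

/-- The product vector `a ⊗ b`, in the coordinates in which `⊗ₖ` acts on `ι × n`. -/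
def tensorVec [Mul R] (a : ι → R) (b : n → R) : ι × n → R :=
  fun p => a p.1 * b p.2

theorem tensorVec_single_one [MulZeroOneClass R] [DecidableEq ι] [DecidableEq n] (i : ι) (j : n) :
    tensorVec (Pi.single i 1) (Pi.single j 1) = (Pi.single (i, j) 1 : ι × n → R) := by
  ext ⟨k, x⟩
  simp [tensorVec, Pi.single_apply, ← ite_and, and_comm]

theorem tensorVec_single_one_left [MulZeroOneClass R] [DecidableEq ι] (i : ι) (b : n → R) :
    tensorVec (Pi.single i 1) b = fun p => (if p.1 = i then 1 else 0) * b p.2 := by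
  ext p
  rw [tensorVec, Pi.single_apply]

theorem kronecker_one_eq_of [MulZeroOneClass R] [DecidableEq n] (A : Matrix m ι R) :
    A ⊗ₖ (1 : Matrix n n R) = of fun p q => A p.1 q.1 * if p.2 = q.2 then 1 else 0 := by
  ext p q
  rw [kroneckerMap_apply, one_apply, of_apply]

theorem kronecker_mulVec_tensorVec {l : Type*} [CommSemiring R] [Fintype ι]
    [Fintype n] (A : Matrix l ι R) (B : Matrix m n R) (a : ι → R) (b : n → R) :
    (A ⊗ₖ B) *ᵥ tensorVec a b = tensorVec (A *ᵥ a) (B *ᵥ b) := by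
  ext ⟨i, j⟩
  simp only [mulVec, dotProduct, tensorVec, kroneckerMap_apply, Fintype.sum_prod_type,
    Finset.sum_mul_sum, mul_mul_mul_comm]

end ProductVectors

section Controlled

variable {ι m n R : Type*} [Fintype ι] [DecidableEq ι]

/-- The controlled operator `∑ κ, |κ⟩⟨κ| ⊗ U κ`, which applies `U κ` to the second register when
the first one holds `κ`. It is `Matrix.blockDiagonal` with the block label placed first. -/
def controlled [NonAssocSemiring R] (U : ι → Matrix m n R) : Matrix (ι × m) (ι × n) R :=
  ∑ κ, single κ κ 1 ⊗ₖ U κ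

theorem controlled_eq_of [NonAssocSemiring R] (U : ι → Matrix m n R) :
    controlled U = of fun p q => if p.1 = q.1 then U p.1 p.2 q.2 else 0 := by
  ext ⟨i, x⟩ ⟨j, y⟩
  simp [controlled, Matrix.sum_apply, single_apply, ite_and]

theorem controlled_mulVec_tensorVec [CommSemiring R] [Fintype n] (U : ι → Matrix m n R)
    (a : ι → R) (b : n → R) :
    controlled U *ᵥ tensorVec a b = fun p => a p.1 * (U p.1 *ᵥ b) p.2 := by
  ext ⟨i, x⟩
  simp [controlled, sum_mulVec, kronecker_mulVec_tensorVec, tensorVec, single_mulVec,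
    Function.update_apply]

theorem controlled_mul_kronecker_one_mulVec_tensorVec {l : Type*} [CommSemiring R] [Fintype l]
    [Fintype n] [DecidableEq n] (U : ι → Matrix m n R) (V : Matrix ι l R) (a : l → R) (b : n → R) :
    (controlled U * V ⊗ₖ (1 : Matrix n n R)) *ᵥ tensorVec a b =
      fun p => (V *ᵥ a) p.1 * (U p.1 *ᵥ b) p.2 := by
  rw [← mulVec_mulVec, kronecker_mulVec_tensorVec, one_mulVec, controlled_mulVec_tensorVec]

end Controlled

section Labels

variable {G X R : Type*} [DecidableEq G]

/-- The vector `∑ x, ψ x • |μ x⟩ ⊗ |x⟩`, in which the first register records the label of the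
second. -/
def labelledVec [Zero R] (μ : X → G) (ψ : X → R) : G × X → R :=
  fun p => if p.1 = μ p.2 then ψ p.2 else 0

variable [AddGroup G] [DecidableEq X]

/-- The uncompute operator `|κ⟩ ⊗ |x⟩ ↦ |κ - μ x⟩ ⊗ |x⟩`. Since `σ.permMatrix` sends `|p⟩` to
`|σ⁻¹ p⟩`, it is the matrix of the permutation that adds the label. -/
def uncompute (R : Type*) [Zero R] [One R] (μ : X → G) : Matrix (G × X) (G × X) R :=
  Equiv.Perm.permMatrix R (Equiv.prodCongrLeft fun x => Equiv.addRight (μ x))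

theorem uncompute_eq_of [Zero R] [One R] (μ : X → G) :
    uncompute R μ = of fun p q => if p.1 = q.1 - μ q.2 ∧ p.2 = q.2 then 1 else 0 := by
  ext ⟨i, x⟩ ⟨j, y⟩
  by_cases h : x = y
  · subst h
    simp [uncompute, PEquiv.toMatrix_apply, eq_sub_iff_add_eq, eq_comm]
  · simp [uncompute, PEquiv.toMatrix_apply, h]

theorem uncompute_mulVec_labelledVec [CommRing R] [Fintype G] [Fintype X]
    (μ : X → G) (ψ : X → R) :
    uncompute R μ *ᵥ labelledVec μ ψ = tensorVec (Pi.single 0 1) ψ := by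
  rw [uncompute, permMatrix_mulVec]
  ext ⟨κ, x⟩
  simp [labelledVec, tensorVec, Pi.single_apply]

end Labels

theorem stmt1_general {F G X : Type*} [Field F]
    [AddGroup G] [Fintype G] [DecidableEq G] [Fintype X] [DecidableEq X]
    (g : X → F) (μ : X → G) (w : G → F) (hw : ∀ κ, w κ ≠ 0) (c : F)
    (κ₀ : G) (x₀ : X) (U : G → Matrix X X F)
    (hU : ∀ κ, U κ *ᵥ Pi.single x₀ 1 = fun x => if μ x = κ then g x / w κ else 0)
    (V : Matrix G G F) (hV : V *ᵥ Pi.single κ₀ 1 = fun κ => c * w κ) :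
    (controlled U * V ⊗ₖ (1 : Matrix X X F)) *ᵥ Pi.single (κ₀, x₀) 1 =
        labelledVec μ (fun x => c * g x) ∧
      uncompute F μ *ᵥ labelledVec μ (fun x => c * g x) =
        tensorVec (Pi.single 0 1) (fun x => c * g x) := by
  refine ⟨?_, uncompute_mulVec_labelledVec μ _⟩
  rw [← tensorVec_single_one, controlled_mul_kronecker_one_mulVec_tensorVec, hV]
  ext ⟨κ, x⟩
  have amplitude_cancel : c * w κ * (g x / w κ) = c * g x := by
    rw [mul_assoc, mul_div_cancel₀ _ (hw κ)]
  simp only [hU, labelledVec, mul_ite, mul_zero, amplitude_cancel, eq_comm]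

/-- Correctness of the `PREP_g` circuit assembling a reference state from pieces on
disjoint subdomains `D_κ = μ⁻¹(κ)`: (a) the controlled unitaries `U_κ` applied after the
weight-preparation `V` map `e₀ ⊗ e₀` to `ψ' = (1/𝒩)·Σ_x g(x)·e_{μ(x)} ⊗ e_x`, and
(b) the uncompute permutation `T : e_κ ⊗ e_x ↦ e_{κ−μ(x)} ⊗ e_x` maps `ψ'` to
`e₀ ⊗ ψ_g` with `ψ_g = (1/𝒩)·Σ_x g(x)·e_x`. -/
theorem stmt1 (N K : ℕ) [NeZero N] [NeZero K]
    (g : Fin N → ℝ) (μ : Fin N → Fin K)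
    (𝒩sub : Fin K → ℝ)
    (h𝒩sub : ∀ κ, 𝒩sub κ
      = Real.sqrt (∑ x ∈ Finset.univ.filter (fun x => μ x = κ), g x ^ 2))
    (h𝒩pos : ∀ κ, 0 < 𝒩sub κ)
    (𝒩 : ℝ) (h𝒩 : 𝒩 = Real.sqrt (∑ x, g x ^ 2))
    (U : Fin K → Matrix.unitaryGroup (Fin N) ℂ)
    (hU : ∀ κ, (U κ : Matrix (Fin N) (Fin N) ℂ).mulVec (Pi.single 0 1)
      = fun x => if μ x = κ then ((g x / 𝒩sub κ : ℝ) : ℂ) else 0)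
    (V : Matrix.unitaryGroup (Fin K) ℂ)
    (hV : (V : Matrix (Fin K) (Fin K) ℂ).mulVec (Pi.single 0 1)
      = fun κ => ((𝒩sub κ / 𝒩 : ℝ) : ℂ))
    (W : Matrix (Fin K × Fin N) (Fin K × Fin N) ℂ)
    (hW : W =
      (Matrix.of fun p q : Fin K × Fin N =>
        if p.1 = q.1 then (U p.1 : Matrix (Fin N) (Fin N) ℂ) p.2 q.2 else 0)
      * (Matrix.of fun p q : Fin K × Fin N =>
        (V : Matrix (Fin K) (Fin K) ℂ) p.1 q.1 * (if p.2 = q.2 then 1 else 0)))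
    (T : Matrix (Fin K × Fin N) (Fin K × Fin N) ℂ)
    (hT : T = Matrix.of fun p q : Fin K × Fin N =>
      if p.1 = q.1 - μ q.2 ∧ p.2 = q.2 then 1 else 0)
    (ψ' : Fin K × Fin N → ℂ)
    (hψ' : ψ' = fun p => if p.1 = μ p.2 then ((g p.2 / 𝒩 : ℝ) : ℂ) else 0) :
    W.mulVec (Pi.single ((0 : Fin K), (0 : Fin N)) 1) = ψ' ∧
    T.mulVec ψ'
      = fun p : Fin K × Fin N =>
          (if p.1 = 0 then 1 else 0) * ((g p.2 / 𝒩 : ℝ) : ℂ) := by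
  subst hW hT hψ'
  simpa only [controlled_eq_of, kronecker_one_eq_of, uncompute_eq_of, tensorVec_single_one_left,
    div_eq_inv_mul, Complex.ofReal_mul, Complex.ofReal_inv] using!
    stmt1_general (fun x => (g x : ℂ)) μ (fun κ => (𝒩sub κ : ℂ))
      (fun κ => Complex.ofReal_ne_zero.2 (h𝒩pos κ).ne') (𝒩 : ℂ)⁻¹ 0 0
      (fun κ => U κ) (by simpa only [Complex.ofReal_div] using hU)
      V (by simpa only [div_eq_inv_mul, Complex.ofReal_mul, Complex.ofReal_inv] using hV)
end

section
/- Let f, g, ν, ε₀, ε̃, r̃ be real numbers and M a positive integer, with f ≥ 0, g > 0, ν > 0, ε₀ > 0, ε̃ ≥ 0. Assume: (i) |r̃ − f/g| ≤ ε̃; (ii) ε̃ ≤ ε₀·ν/g; and (iii) M·(ε₀·ν/g − ε̃) ≥ 1. Then | g·⌊M·r̃⌋/(M·ν) − f/ν | ≤ ε₀. -/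
theorem mul_div_sub_div_eq_div_mul_sub {K : Type*} [Field K] {g : K} (hg : g ≠ 0)
    (f ν q : K) : g * q / ν - f / ν = g / ν * (q - f / g) := by
  field_simp

section FloorApproximation

variable {K : Type*} [Field K] [LinearOrder K] [IsStrictOrderedRing K] [FloorRing K]

theorem abs_floor_mul_div_sub_lt_inv {M : K} (hM : 0 < M) (r : K) :
    |(⌊M * r⌋ : K) / M - r| < M⁻¹ := by
  have error_eq : r - (⌊M * r⌋ : K) / M = Int.fract (M * r) / M := by
    rw [← Int.self_sub_floor, sub_div, mul_div_cancel_left₀ r hM.ne']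
  rw [abs_sub_comm, error_eq, abs_div, Int.abs_fract, abs_of_pos hM, inv_eq_one_div]
  exact div_lt_div_of_pos_right (Int.fract_lt_one _) hM

theorem abs_floor_mul_div_sub_lt_of_abs_sub_le {M r x ε : K} (hM : 0 < M)
    (hr : |r - x| ≤ ε) : |(⌊M * r⌋ : K) / M - x| < M⁻¹ + ε :=
  (abs_sub_le _ r x).trans_lt (add_lt_add_of_lt_of_le (abs_floor_mul_div_sub_lt_inv hM r) hr)

theorem stmt3_general {f g ν ε₀ ε r M : K} (hM : 0 < M) (hg : 0 < g) (hν : 0 < ν)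
    (hr : |r - f / g| ≤ ε) (hMε : 1 ≤ M * (ε₀ * ν / g - ε)) :
    |g * (⌊M * r⌋ : K) / (M * ν) - f / ν| < ε₀ := by
  have inv_le : M⁻¹ ≤ ε₀ * ν / g - ε := (inv_le_iff_one_le_mul₀' hM).mpr hMε
  have ratio_error : |(⌊M * r⌋ : K) / M - f / g| < ε₀ * ν / g :=
    (abs_floor_mul_div_sub_lt_of_abs_sub_le hM hr).trans_le (le_sub_iff_add_le.mp inv_le)
  calc |g * (⌊M * r⌋ : K) / (M * ν) - f / ν|
      = |g * ((⌊M * r⌋ : K) / M) / ν - f / ν| := by rw [← mul_div_assoc, div_div]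
    _ = g / ν * |(⌊M * r⌋ : K) / M - f / g| := by
      rw [mul_div_sub_div_eq_div_mul_sub hg.ne', abs_mul, abs_of_pos (div_pos hg hν)]
    _ < g / ν * (ε₀ * ν / g) := mul_lt_mul_of_pos_left ratio_error (div_pos hg hν)
    _ = ε₀ := by field_simp

end FloorApproximation

/-- Accuracy of the floor-based comparator: if `r̃` approximates `f/g` within `ε̃`,
`ε̃ ≤ ε₀·ν/g`, and `M·(ε₀·ν/g − ε̃) ≥ 1`, then `g·⌊M·r̃⌋/(M·ν)` approximates `f/ν`
within `ε₀`. -/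
theorem stmt3 (f g ν ε₀ εt rt : ℝ) (M : ℕ) (hM : 0 < M)
    (hf : 0 ≤ f) (hg : 0 < g) (hν : 0 < ν) (hε₀ : 0 < ε₀) (hεt : 0 ≤ εt)
    (h1 : |rt - f / g| ≤ εt)
    (h2 : εt ≤ ε₀ * ν / g)
    (h3 : 1 ≤ (M : ℝ) * (ε₀ * ν / g - εt)) :
    |g * (⌊(M : ℝ) * rt⌋ : ℝ) / ((M : ℝ) * ν) - f / ν| ≤ ε₀ := by
  exact (stmt3_general (Nat.cast_pos.mpr hM) hg hν h1 h3).le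
end

section
/- For every real β > 0 with β ≠ 1/2 and every integer n ≥ 1: Σ_{x=1}^{2^n−1} x^{−2β} ≥ ((2^{1−2β} − 1)/(1 − 2β)) · Σ_{μ=0}^{n−1} 2^{μ(1−2β)}. Equivalently, the success probability P_succ = 𝒩_f²/𝒩_g² of quantum rejection sampling for the power-law target with the ziggurat reference satisfies P_succ ≥ (2^{1−2β} − 1)/(1 − 2β). -/
open scoped BigOperators

/-! For `0 ≤ p` the function `x ↦ x ^ (-p)` decreases on `(0, ∞)`, so its sum over `1 ≤ x < b ^ n`
is at least its integral over `[1, b ^ n]`, which for `p ≠ 1` is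
`((b ^ n) ^ (1 - p) - 1) / (1 - p)`. The numerator is `b ^ (1 - p) - 1` times the geometric sum
`∑ μ < n, b ^ (μ * (1 - p))`; the ziggurat is the case `b = 2`, `p = 2 * β`. -/

theorem integral_rpow_neg_le_sum_Ico {p : ℝ} (hp : 0 ≤ p) {a b : ℕ} (ha : 0 < a) (hab : a ≤ b) :
    ∫ x in (a : ℝ)..b, x ^ (-p) ≤ ∑ x ∈ Finset.Ico a b, (x : ℝ) ^ (-p) := by
  have hanti : AntitoneOn (fun x : ℝ => x ^ (-p)) (Set.Icc a b) :=
    (Real.antitoneOn_rpow_Ioi_of_exponent_nonpos (neg_nonpos.mpr hp)).mono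
      fun _ hx => (Nat.cast_pos.mpr ha).trans_le hx.1
  exact hanti.integral_le_sum_Ico hab

theorem integral_rpow_neg {p : ℝ} (hp : p ≠ 1) {a b : ℝ} (ha : 0 < a) (hb : 0 < b) :
    ∫ x in a..b, x ^ (-p) = (b ^ (1 - p) - a ^ (1 - p)) / (1 - p) := by
  rw [integral_rpow (Or.inr ⟨mt neg_inj.mp hp, Set.notMem_uIcc_of_lt ha hb⟩), neg_add_eq_sub]

theorem mul_geom_sum_rpow {b : ℝ} (hb : 0 ≤ b) (t : ℝ) (n : ℕ) :
    (b ^ t - 1) * ∑ μ ∈ Finset.range n, b ^ ((μ : ℝ) * t) = (b ^ n) ^ t - 1 := by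
  simp only [Real.rpow_natCast_mul hb, ← Real.rpow_pow_comm hb, mul_geom_sum]

theorem stmt4_general {p : ℝ} (hp : 0 ≤ p) (hp' : p ≠ 1) {b : ℕ} (hb : 0 < b) (n : ℕ) :
    ((b : ℝ) ^ (1 - p) - 1) / (1 - p) * ∑ μ ∈ Finset.range n, (b : ℝ) ^ ((μ : ℝ) * (1 - p))
      ≤ ∑ x ∈ Finset.Ico 1 (b ^ n), (x : ℝ) ^ (-p) := by
  have hbn : 0 < b ^ n := Nat.pow_pos hb
  calc ((b : ℝ) ^ (1 - p) - 1) / (1 - p) * ∑ μ ∈ Finset.range n, (b : ℝ) ^ ((μ : ℝ) * (1 - p))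
      = (((b : ℝ) ^ n) ^ (1 - p) - 1) / (1 - p) := by
        rw [div_mul_eq_mul_div, mul_geom_sum_rpow b.cast_nonneg]
    _ = ∫ x in ((1 : ℕ) : ℝ)..(b ^ n : ℕ), x ^ (-p) := by
        rw [integral_rpow_neg hp' (by norm_num) (Nat.cast_pos.mpr hbn), Nat.cast_one,
          Real.one_rpow, Nat.cast_pow]
    _ ≤ ∑ x ∈ Finset.Ico 1 (b ^ n), (x : ℝ) ^ (-p) :=
        integral_rpow_neg_le_sum_Ico hp one_pos hbn

/-- Success probability of quantum rejection sampling for the power-law target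
`f(x) = x^{-β}` with the ziggurat reference: for `β > 0`, `β ≠ 1/2`,
`𝒩_f² = Σ_{x=1}^{2^n−1} x^{−2β}` is at least `((2^{1−2β} − 1)/(1 − 2β))·𝒩_g²`,
where `𝒩_g² = Σ_{μ=0}^{n−1} 2^{μ(1−2β)}`. -/
theorem stmt4 (β : ℝ) (hβ : 0 < β) (hβ' : β ≠ 1 / 2) (n : ℕ) (hn : 1 ≤ n) :
    (∑ x ∈ Finset.Icc (1 : ℕ) (2 ^ n - 1), (x : ℝ) ^ (-(2 * β)))
      ≥ ((2 : ℝ) ^ (1 - 2 * β) - 1) / (1 - 2 * β)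
        * ∑ μ ∈ Finset.range n, (2 : ℝ) ^ ((μ : ℝ) * (1 - 2 * β)) := by
  rw [Finset.Icc_sub_one_right_eq_Ico_of_not_isMin (by simp)]
  exact stmt4_general (by positivity) (fun h => hβ' (by linarith)) two_pos n
end

section
/- For every real β ≥ 1 and every integer n ≥ 1, set 𝒩_f² := Σ_{x=1}^{2^n−1} x^{−2β} and 𝒩_g² := Σ_{μ=0}^{n−1} 2^{μ(1−2β)}. Then 0 < 𝒩_f ≤ 𝒩_g, and the number of amplitude-amplification rounds R := ⌈ π/(4·arcsin(𝒩_f/𝒩_g)) − 1/2 ⌉ satisfies R ≤ 2β + 1. -/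
open scoped BigOperators

/-!
For a non-increasing target `f`, the ziggurat reference replaces `f` on each dyadic block
`2 ^ μ ≤ x < 2 ^ (μ + 1)` by its value at the left end point, so its squared norm is the condensed
sum `∑ 2 ^ μ * f (2 ^ μ) ^ 2`. Cauchy's condensation estimate bounds this sum by twice the squared
norm of `f`. Hence `𝒩_f / 𝒩_g ≥ 1 / √2 > 1 / 2 = sin (π / 6)`, and an overlap of at least
`sin (π / 6)` is exactly what makes one round of amplification enough. For `f x = x ^ (-β)` the
number of rounds therefore does not grow with `β` at all.
-/

open Finset Real

/-- The number of rounds of amplitude amplification needed when the overlap of the target state with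
the reference state is `r`. It is meant for `0 < r ≤ 1`; at `r = 0` the division by zero makes it
`0`. -/
noncomputable def amplificationRounds (r : ℝ) : ℤ :=
  ⌈π / (4 * arcsin r) - 1 / 2⌉

/-- The ziggurat of `f`: the step function taking on each dyadic block `2 ^ μ ≤ x < 2 ^ (μ + 1)` the
value of `f` at `2 ^ μ`. It is the reference from which `f` is prepared. Only arguments `1 ≤ x`
matter; the junk value at `0` is `f 1`. -/
def ziggurat {M : Type*} (f : ℕ → M) (x : ℕ) : M :=
  f (2 ^ Nat.log 2 x)

/-- The norm `𝒩_f` of the unnormalized state `∑ f x |x⟩` on `n` qubits, where `x` runs over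
`1, …, 2 ^ n - 1` as in the power-law problem: the basis state `|0⟩` is left out. -/
noncomputable def registerNorm (n : ℕ) (f : ℕ → ℝ) : ℝ :=
  √(∑ x ∈ Ico 1 (2 ^ n), f x ^ 2)

theorem amplificationRounds_le {k : ℕ} {r : ℝ} (hr : sin (π / (4 * k + 2)) ≤ r) :
    amplificationRounds r ≤ k := by
  have hangle : π / (4 * k + 2) ≤ arcsin r := by
    refine (le_arcsin_iff_sin_le' ⟨?_, ?_⟩).2 hr
    · exact (neg_neg_of_pos pi_div_two_pos).trans (by positivity)
    · gcongr
      linarith [k.cast_nonneg (α := ℝ)]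
  have harcsin : 0 < arcsin r := lt_of_lt_of_le (by positivity) hangle
  have hquot : π / (4 * arcsin r) ≤ k + 1 / 2 := by
    rw [div_le_iff₀ (by positivity)] at hangle ⊢
    linarith
  exact Int.ceil_le.2 (by push_cast; linarith)

section Ziggurat

variable {M : Type*}

theorem le_ziggurat [Preorder M] {f : ℕ → M} (hf : AntitoneOn f (Set.Ici 1)) {x : ℕ}
    (hx : 1 ≤ x) : f x ≤ ziggurat f x :=
  hf (Set.mem_Ici.2 Nat.one_le_two_pow) hx (Nat.pow_log_le_self 2 (Nat.ne_of_gt hx))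

variable [AddCommMonoid M]

theorem sum_ziggurat (f : ℕ → M) (n : ℕ) :
    ∑ x ∈ Ico 1 (2 ^ n), ziggurat f x = ∑ μ ∈ range n, 2 ^ μ • f (2 ^ μ) := by
  induction n with
  | zero => simp
  | succ n ih =>
    have hblock : ∀ x ∈ Ico (2 ^ n) (2 ^ (n + 1)), ziggurat f x = f (2 ^ n) := fun x hx ↦ by
      rw [ziggurat, Nat.log_eq_of_pow_le_of_lt_pow (mem_Ico.1 hx).1 (mem_Ico.1 hx).2]
    have hcard : #(Ico (2 ^ n) (2 ^ (n + 1))) = 2 ^ n := by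
      rw [Nat.card_Ico, pow_succ, mul_two, Nat.add_sub_cancel]
    rw [← sum_Ico_consecutive _ n.one_le_two_pow (Nat.pow_le_pow_right two_pos n.le_succ), ih,
      sum_eq_card_nsmul hblock, hcard, sum_range_succ]

theorem sum_ziggurat_le [PartialOrder M] [IsOrderedAddMonoid M] {f : ℕ → M}
    (hf : AntitoneOn f (Set.Ici 1)) (hf₀ : ∀ x, 0 ≤ f x) (n : ℕ) :
    ∑ x ∈ Ico 1 (2 ^ n), ziggurat f x ≤ 2 • ∑ x ∈ Ico 1 (2 ^ n), f x := by
  cases n with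
  | zero => simp
  | succ n =>
    have hn : 2 ^ n + 1 ≤ 2 ^ (n + 1) := by
      rw [pow_succ, mul_two]
      exact Nat.add_le_add_left n.one_le_two_pow _
    calc ∑ x ∈ Ico 1 (2 ^ (n + 1)), ziggurat f x
        = ∑ μ ∈ range (n + 1), 2 ^ μ • f (2 ^ μ) := sum_ziggurat f (n + 1)
      _ ≤ f 1 + 2 • ∑ x ∈ Ico 2 (2 ^ n + 1), f x :=
          sum_condensed_le (fun _ _ hm hmk ↦ hf hm.le (hm.le.trans hmk) hmk) n
      _ ≤ 2 • f 1 + 2 • ∑ x ∈ Ico 2 (2 ^ (n + 1)), f x := by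
          gcongr
          · rw [two_nsmul]
            exact le_add_of_nonneg_left (hf₀ 1)
          · exact fun x _ _ ↦ hf₀ x
      _ = 2 • ∑ x ∈ Ico 1 (2 ^ (n + 1)), f x := by
          rw [← nsmul_add, ← sum_eq_sum_Ico_succ_bot (Nat.one_lt_two_pow n.succ_ne_zero)]

end Ziggurat

section RegisterNorm

variable {f : ℕ → ℝ}

theorem registerNorm_pos (hf : f 1 ≠ 0) {n : ℕ} (hn : 1 ≤ n) : 0 < registerNorm n f :=
  sqrt_pos.2 <| sum_pos' (fun x _ ↦ sq_nonneg (f x))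
    ⟨1, mem_Ico.2 ⟨le_rfl, Nat.one_lt_two_pow (Nat.ne_of_gt hn)⟩, by positivity⟩

theorem registerNorm_le_registerNorm_ziggurat (hf : AntitoneOn f (Set.Ici 1))
    (hf₀ : ∀ x, 0 ≤ f x) (n : ℕ) : registerNorm n f ≤ registerNorm n (ziggurat f) :=
  sqrt_le_sqrt <| sum_le_sum fun x hx ↦
    pow_le_pow_left₀ (hf₀ x) (le_ziggurat hf (mem_Ico.1 hx).1) 2

theorem registerNorm_ziggurat_le (hf : AntitoneOn f (Set.Ici 1)) (hf₀ : ∀ x, 0 ≤ f x) (n : ℕ) :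
    registerNorm n (ziggurat f) ≤ √2 * registerNorm n f := by
  have hsq : AntitoneOn (fun x ↦ f x ^ 2) (Set.Ici 1) := fun x hx y hy hxy ↦
    pow_le_pow_left₀ (hf₀ y) (hf hx hy hxy) 2
  rw [registerNorm, registerNorm, ← sqrt_mul zero_le_two]
  refine sqrt_le_sqrt ((sum_ziggurat_le hsq (fun x ↦ sq_nonneg (f x)) n).trans_eq ?_)
  rw [nsmul_eq_mul, Nat.cast_ofNat]

end RegisterNorm

theorem stmt6_general {f : ℕ → ℝ} (hf : AntitoneOn f (Set.Ici 1)) (hf₀ : ∀ x, 0 ≤ f x)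
    (hf₁ : f 1 ≠ 0) {n : ℕ} (hn : 1 ≤ n) :
    0 < registerNorm n f ∧ registerNorm n f ≤ registerNorm n (ziggurat f) ∧
      amplificationRounds (registerNorm n f / registerNorm n (ziggurat f)) ≤ 1 := by
  have hpos : 0 < registerNorm n f := registerNorm_pos hf₁ hn
  have hle := registerNorm_le_registerNorm_ziggurat hf hf₀ n
  have hoverlap : 1 / 2 ≤ registerNorm n f / registerNorm n (ziggurat f) := by
    rw [div_le_div_iff₀ two_pos (hpos.trans_le hle), one_mul, mul_comm]
    exact (registerNorm_ziggurat_le hf hf₀ n).trans (by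
      gcongr
      exact sqrt_le_self_iff.2 (.inr one_le_two))
  refine ⟨hpos, hle, amplificationRounds_le (k := 1) ?_⟩
  norm_num [sin_pi_div_six, hoverlap]

section PowerLaw

theorem antitoneOn_rpow_neg {β : ℝ} (hβ : 0 ≤ β) :
    AntitoneOn (fun x : ℕ ↦ (x : ℝ) ^ (-β)) (Set.Ici 1) := fun _ hx _ _ hxy ↦
  rpow_le_rpow_of_nonpos (Nat.cast_pos.2 hx) (Nat.cast_le.2 hxy) (neg_nonpos.2 hβ)

theorem sq_rpow_neg {x : ℝ} (hx : 0 ≤ x) (β : ℝ) : (x ^ (-β)) ^ 2 = x ^ (-(2 * β)) := by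
  rw [← rpow_mul_natCast hx]
  ring_nf

theorem registerNorm_rpow_neg (β : ℝ) (n : ℕ) :
    registerNorm n (fun x ↦ (x : ℝ) ^ (-β)) =
      √(∑ x ∈ Icc (1 : ℕ) (2 ^ n - 1), (x : ℝ) ^ (-(2 * β))) := by
  have hne : ¬IsMin (2 ^ n) := not_isMin_iff_ne_bot.2 (pow_ne_zero n two_ne_zero)
  simp only [registerNorm, sq_rpow_neg (Nat.cast_nonneg _),
    Icc_sub_one_right_eq_Ico_of_not_isMin hne]

theorem registerNorm_ziggurat_rpow_neg (β : ℝ) (n : ℕ) :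
    registerNorm n (ziggurat fun x ↦ (x : ℝ) ^ (-β)) =
      √(∑ μ ∈ range n, (2 : ℝ) ^ ((μ : ℝ) * (1 - 2 * β))) := by
  have hterm (μ : ℕ) : 2 ^ μ • (((2 ^ μ : ℕ) : ℝ) ^ (-β)) ^ 2 = (2 : ℝ) ^ (μ * (1 - 2 * β)) := by
    rw [sq_rpow_neg (Nat.cast_nonneg _), nsmul_eq_mul, Nat.cast_pow, Nat.cast_ofNat,
      ← rpow_natCast, ← rpow_mul zero_le_two, ← rpow_add two_pos]
    ring_nf
  rw [registerNorm, ← sum_congr rfl fun μ _ ↦ hterm μ]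
  exact congrArg sqrt (sum_ziggurat (fun x : ℕ ↦ ((x : ℝ) ^ (-β)) ^ 2) n)

end PowerLaw

/-- For the power-law target `f(x) = x^{−β}` with `β ≥ 1` and its ziggurat reference,
`0 < 𝒩_f ≤ 𝒩_g`, and the number of amplitude-amplification rounds
`R = ⌈π/(4·arcsin(𝒩_f/𝒩_g)) − 1/2⌉` satisfies `R ≤ 2β + 1`. -/
theorem stmt6 (β : ℝ) (hβ : 1 ≤ β) (n : ℕ) (hn : 1 ≤ n) (Nf Ng : ℝ)
    (hNf : Nf = Real.sqrt (∑ x ∈ Finset.Icc (1 : ℕ) (2 ^ n - 1), (x : ℝ) ^ (-(2 * β))))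
    (hNg : Ng = Real.sqrt (∑ μ ∈ Finset.range n, (2 : ℝ) ^ ((μ : ℝ) * (1 - 2 * β)))) :
    0 < Nf ∧ Nf ≤ Ng ∧
      ((⌈Real.pi / (4 * Real.arcsin (Nf / Ng)) - 1 / 2⌉ : ℤ) : ℝ) ≤ 2 * β + 1 := by
  obtain rfl := hNf.trans (registerNorm_rpow_neg β n).symm
  obtain rfl := hNg.trans (registerNorm_ziggurat_rpow_neg β n).symm
  obtain ⟨hpos, hle, hrounds⟩ := stmt6_general (antitoneOn_rpow_neg (zero_le_one.trans hβ))
    (fun x ↦ rpow_nonneg x.cast_nonneg (-β)) (by simp) hn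
  exact ⟨hpos, hle, (Int.cast_le.2 hrounds).trans (by push_cast; linarith)⟩
end

section
/- Let δ, σ be real numbers with 0 < δ, 8δ ≤ σ and σ ≤ 1/4, and let T = {(k+1/2)·δ : k ∈ ℕ, (k+1/2)·δ ≤ 1/2}. Then Σ_{t∈T} exp(−2t²/σ²) ≥ (1/4)·( #{t ∈ T : t ≤ σ} + Σ_{t∈T, t>σ} exp(−2t/σ) ). Equivalently, for the Gaussian target f(x) = exp(−x²/σ²) on the symmetric grid ±T and the reference g with g(x) = 1 for |x| ≤ σ and g(x) = exp(−|x|/σ) for |x| > σ, the success probability 𝒩_f²/𝒩_g² is at least 1/4, so a single round of amplitude amplification suffices. -/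
open scoped BigOperators

/-!
In units of `σ` the grid points are `t = (k + 1/2) u` with `u = δ / σ ≤ 1`. Suppose that `n` of them
are at most `1`. By Jensen's inequality the Gaussian mass of these points is at least
`n * exp (-2 m)`, where `m = u² (4 n² - 1) / 12` is the mean of `t²`; and the reference mass of the
points beyond `1` is at most `exp (-2 n u) / (2 u)`, because the midpoint rule underestimates the
integral of a convex function. With `y = 2 n u`, so that `2 m = (y² - u²) / 6`, it remains to check
`1 + exp (-y) / y ≤ 4 * exp (-(y² - u²) / 6)` for `1 ≤ y ≤ 2 + u`; when no point lies beyond `1`,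
`1 ≤ 4 * exp (-2 m)` suffices, and `2 m ≤ 4 / 3` because `y ≤ 2 + u` and `u ≤ 1`.
-/

open Finset Real

theorem exists_eq_range_of_isLowerSet {s : Finset ℕ} (hs : IsLowerSet (s : Set ℕ)) :
    ∃ n, s = range n := by
  obtain h | ⟨n, hn⟩ := hs.eq_univ_or_Iio
  · exact absurd (h ▸ s.finite_toSet) Set.infinite_univ
  · exact ⟨n, by rw [← coe_inj, hn, coe_range]⟩

theorem exists_filter_eq_range_and_filter_not_eq_Ico {s : Finset ℕ} (hs : IsLowerSet (s : Set ℕ))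
    {p : ℕ → Prop} [DecidablePred p] (hp : Antitone p) :
    ∃ n m, n ≤ m ∧ s = range m ∧ s.filter p = range n ∧ (s.filter fun k ↦ ¬p k) = Ico n m := by
  obtain ⟨m, rfl⟩ := exists_eq_range_of_isLowerSet hs
  have hfilter : IsLowerSet ((range m).filter p : Set ℕ) := fun a b hba ha ↦ by
    rw [mem_coe, mem_filter] at ha ⊢
    exact ⟨hs hba ha.1, hp hba ha.2⟩
  obtain ⟨n, hn⟩ := exists_eq_range_of_isLowerSet hfilter
  refine ⟨n, m, range_subset_range.1 (hn ▸ filter_subset p _), rfl, hn, ?_⟩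
  rw [filter_not, hn, range_eq_Ico, range_eq_Ico]
  grind

theorem card_mul_exp_average_le_sum_exp {ι : Type*} (s : Finset ι) (f : ι → ℝ) :
    #s * exp ((∑ i ∈ s, f i) / #s) ≤ ∑ i ∈ s, exp (f i) := by
  obtain rfl | hs := s.eq_empty_or_nonempty
  · simp
  have hcard : (0 : ℝ) < #s := mod_cast hs.card_pos
  have jensen := convexOn_exp.map_sum_le (t := s) (w := fun _ ↦ (#s : ℝ)⁻¹) (p := f)
    (fun _ _ ↦ by positivity) (by simp [hcard.ne']) (fun _ _ ↦ Set.mem_univ _)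
  simp only [smul_eq_mul, ← mul_sum] at jensen
  rwa [div_eq_inv_mul, ← le_inv_mul_iff₀ hcard]

theorem sum_range_add_half_sq (n : ℕ) :
    ∑ k ∈ range n, ((k : ℝ) + 1 / 2) ^ 2 = n * (4 * (n : ℝ) ^ 2 - 1) / 12 := by
  induction n with
  | zero => simp
  | succ n ih =>
    rw [sum_range_succ, ih]
    push_cast
    ring

theorem mul_exp_le_sum_range_exp_add_half_sq (a : ℝ) (n : ℕ) :
    n * exp (-(a * (4 * n ^ 2 - 1) / 12)) ≤
      ∑ k ∈ range n, exp (-(a * ((k : ℝ) + 1 / 2) ^ 2)) := by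
  obtain rfl | hn := n.eq_zero_or_pos
  · simp
  have h := card_mul_exp_average_le_sum_exp (range n) fun k ↦ -(a * ((k : ℝ) + 1 / 2) ^ 2)
  rw [sum_neg_distrib, ← mul_sum, sum_range_add_half_sq, card_range] at h
  convert h using 3
  field_simp

theorem exp_neg_mul_add_half_le {a : ℝ} (ha : 0 < a) (x : ℝ) :
    exp (-(a * (x + 1 / 2))) ≤ (exp (-(a * x)) - exp (-(a * (x + 1)))) / a := by
  have hsinh : a / 2 ≤ sinh (a / 2) := self_le_sinh_iff.2 (by positivity)
  have hleft : exp (-(a * x)) = exp (-(a * (x + 1 / 2))) * exp (a / 2) := by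
    rw [← exp_add]
    ring_nf
  have hright : exp (-(a * (x + 1))) = exp (-(a * (x + 1 / 2))) * exp (-(a / 2)) := by
    rw [← exp_add]
    ring_nf
  rw [le_div_iff₀ ha, hleft, hright, ← mul_sub]
  gcongr
  linarith [sinh_eq (a / 2)]

theorem sum_Ico_exp_neg_mul_add_half_le {a : ℝ} (ha : 0 < a) (n m : ℕ) :
    ∑ k ∈ Ico n m, exp (-(a * ((k : ℝ) + 1 / 2))) ≤ exp (-(a * n)) / a := by
  obtain hmn | hnm := le_total m n
  · rw [Ico_eq_empty_of_le hmn, sum_empty]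
    positivity
  calc ∑ k ∈ Ico n m, exp (-(a * ((k : ℝ) + 1 / 2)))
      ≤ ∑ k ∈ Ico n m, (exp (-(a * k)) - exp (-(a * (k + 1)))) / a :=
        sum_le_sum fun k _ ↦ exp_neg_mul_add_half_le ha k
    _ = (exp (-(a * n)) - exp (-(a * m))) / a := by
        have telescope := sum_Ico_sub (fun k : ℕ ↦ -exp (-(a * k))) hnm
        simp only [Nat.cast_add, Nat.cast_one, neg_sub_neg] at telescope
        rw [← sum_div, telescope]
    _ ≤ exp (-(a * n)) / a := by
        gcongr
        exact sub_le_self _ (exp_pos _).le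

theorem exp_four_thirds_le : exp (4 / 3) ≤ 96 / 25 := by
  have hpow : exp (4 / 3) ^ 3 = exp 1 ^ 4 := by
    rw [← exp_nat_mul, ← exp_nat_mul]
    norm_num
  refine le_of_pow_le_pow_left₀ three_ne_zero (by norm_num) ?_
  calc exp (4 / 3) ^ 3 = exp 1 ^ 4 := hpow
    _ ≤ 2.72 ^ 4 := by gcongr; linarith [exp_one_lt_d9]
    _ ≤ (96 / 25) ^ 3 := by norm_num

theorem ten_le_exp_twelve_fifths : 10 ≤ exp (12 / 5) := by
  have hpow : exp (12 / 5) ^ 5 = exp 1 ^ 12 := by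
    rw [← exp_nat_mul, ← exp_nat_mul]
    norm_num
  refine le_of_pow_le_pow_left₀ (n := 5) (by norm_num) (exp_pos _).le ?_
  calc (10 : ℝ) ^ 5 ≤ 2.7 ^ 12 := by norm_num
    _ ≤ exp 1 ^ 12 := by gcongr; linarith [exp_one_gt_d9]
    _ = exp (12 / 5) ^ 5 := hpow.symm

theorem one_add_exp_neg_div_le {u y : ℝ} (hu : u ≤ 1) (hy : 1 ≤ y) (hyu : y ≤ 2 + u) :
    1 + exp (-y) / y ≤ 4 * exp (-((y ^ 2 - u ^ 2) / 6)) := by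
  obtain hy₆ | hy₆ := le_total (y ^ 2) 6
  · have he : 1 ≤ 3 * exp (-1) := by
      rw [exp_neg, ← div_eq_mul_inv, one_le_div (exp_pos 1)]
      exact exp_one_lt_three.le
    calc 1 + exp (-y) / y ≤ 1 + exp (-1) / 1 := by gcongr
      _ ≤ 4 * exp (-1) := by linarith
      _ ≤ 4 * exp (-((y ^ 2 - u ^ 2) / 6)) := by
          gcongr
          nlinarith
  · have hy' : 12 / 5 ≤ y := by nlinarith
    calc 1 + exp (-y) / y ≤ 1 + exp (-(12 / 5)) / (12 / 5) := by gcongr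
      _ ≤ 1 + 10⁻¹ / (12 / 5) := by
          rw [exp_neg]
          gcongr
          exact ten_le_exp_twelve_fifths
      _ = 4 * (96 / 25)⁻¹ := by norm_num
      _ ≤ 4 * exp (-(4 / 3)) := by
          rw [exp_neg]
          gcongr
          exact exp_four_thirds_le
      _ ≤ 4 * exp (-((y ^ 2 - u ^ 2) / 6)) := by
          gcongr 4 * exp (-?_)
          nlinarith

section

variable {u : ℝ} {n : ℕ}

theorem card_le_four_mul_sum_gaussian (hu₀ : 0 ≤ u) (hu₁ : u ≤ 1)
    (hn : ((n : ℝ) - 1 / 2) * u ≤ 1) :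
    n ≤ 4 * ∑ k ∈ range n, exp (-(2 * u ^ 2 * ((k : ℝ) + 1 / 2) ^ 2)) := by
  have hmean : 2 * u ^ 2 * (4 * n ^ 2 - 1) / 12 ≤ 4 / 3 := by
    have hy : (2 * n * u) ^ 2 ≤ (2 + u) ^ 2 := by
      gcongr
      linarith
    linarith
  have hexp : 1 ≤ 4 * exp (-(4 / 3)) := by
    rw [exp_neg, ← div_eq_mul_inv, one_le_div (exp_pos _)]
    linarith [exp_four_thirds_le]
  calc (n : ℝ) ≤ n * (4 * exp (-(4 / 3))) := le_mul_of_one_le_right n.cast_nonneg hexp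
    _ = 4 * (n * exp (-(4 / 3))) := by ring
    _ ≤ 4 * (n * exp (-(2 * u ^ 2 * (4 * n ^ 2 - 1) / 12))) := by gcongr
    _ ≤ _ := by
        gcongr
        exact mul_exp_le_sum_range_exp_add_half_sq (2 * u ^ 2) n

theorem card_add_sum_tail_le_four_mul_sum_gaussian (hu₀ : 0 < u) (hu₁ : u ≤ 1)
    (hn : ((n : ℝ) - 1 / 2) * u ≤ 1) (hn' : 1 < ((n : ℝ) + 1 / 2) * u) (m : ℕ) :
    n + ∑ k ∈ Ico n m, exp (-(2 * u * ((k : ℝ) + 1 / 2))) ≤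
      4 * ∑ k ∈ range n, exp (-(2 * u ^ 2 * ((k : ℝ) + 1 / 2) ^ 2)) := by
  set y := 2 * u * n with hy
  have hn₀ : (0 : ℝ) < n := pos_of_mul_pos_right (by linarith : 0 < u * n) hu₀.le
  calc n + ∑ k ∈ Ico n m, exp (-(2 * u * ((k : ℝ) + 1 / 2)))
      ≤ n + exp (-y) / (2 * u) := by
        gcongr
        exact sum_Ico_exp_neg_mul_add_half_le (by positivity) n m
    _ = n * (1 + exp (-y) / y) := by rw [hy]; field_simp
    _ ≤ n * (4 * exp (-((y ^ 2 - u ^ 2) / 6))) := by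
        gcongr
        exact one_add_exp_neg_div_le hu₁ (by linarith) (by linarith)
    _ = 4 * (n * exp (-(2 * u ^ 2 * (4 * n ^ 2 - 1) / 12))) := by rw [hy]; ring_nf
    _ ≤ _ := by
        gcongr
        exact mul_exp_le_sum_range_exp_add_half_sq (2 * u ^ 2) n

end

theorem antitone_add_half_mul_le {δ : ℝ} (hδ : 0 ≤ δ) (σ : ℝ) :
    Antitone fun k : ℕ ↦ ((k : ℝ) + 1 / 2) * δ ≤ σ :=
  fun _ _ hjk h ↦ le_trans (by gcongr) h

theorem card_add_sum_exp_le_four_mul_sum_gaussian {δ σ : ℝ} (hδ : 0 < δ) (hδσ : δ ≤ σ)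
    {T : Finset ℕ} (hT : IsLowerSet (T : Set ℕ)) :
    ((T.filter fun k : ℕ => ((k : ℝ) + 1 / 2) * δ ≤ σ).card : ℝ)
        + ∑ k ∈ T.filter fun k : ℕ => σ < ((k : ℝ) + 1 / 2) * δ,
            exp (-2 * (((k : ℝ) + 1 / 2) * δ) / σ) ≤
      4 * ∑ k ∈ T, exp (-2 * (((k : ℝ) + 1 / 2) * δ) ^ 2 / σ ^ 2) := by
  have hσ : 0 < σ := hδ.trans_le hδσ
  have hu₀ : 0 < δ / σ := by positivity
  have hu₁ : δ / σ ≤ 1 := (div_le_one hσ).2 hδσ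
  have hgauss (k : ℕ) : -2 * (((k : ℝ) + 1 / 2) * δ) ^ 2 / σ ^ 2 =
      -(2 * (δ / σ) ^ 2 * ((k : ℝ) + 1 / 2) ^ 2) := by ring
  have hexp (k : ℕ) : -2 * (((k : ℝ) + 1 / 2) * δ) / σ =
      -(2 * (δ / σ) * ((k : ℝ) + 1 / 2)) := by ring
  obtain ⟨n, m, hnm, rfl, hcore, htail⟩ :=
    exists_filter_eq_range_and_filter_not_eq_Ico hT (antitone_add_half_mul_le hδ.le σ)
  have hlast : ((n : ℝ) - 1 / 2) * (δ / σ) ≤ 1 := by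
    rw [← mul_div_assoc, div_le_one hσ]
    cases n with
    | zero => push_cast; linarith
    | succ n =>
      have hn := (mem_filter.1 (hcore ▸ self_mem_range_succ n)).2
      push_cast
      linarith
  simp only [not_le] at htail
  simp only [hgauss, hexp, hcore, htail, card_range]
  obtain rfl | hlt := hnm.eq_or_lt
  · simpa using card_le_four_mul_sum_gaussian hu₀.le hu₁ hlast
  have hnext : 1 < ((n : ℝ) + 1 / 2) * (δ / σ) := by
    rw [← mul_div_assoc, one_lt_div hσ]
    have hn : n ∈ Ico n m := left_mem_Ico.2 hlt
    rw [← htail, mem_filter] at hn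
    exact hn.2
  refine (card_add_sum_tail_le_four_mul_sum_gaussian hu₀ hu₁ hlast hnext m).trans ?_
  gcongr

theorem stmt7_general (δ σ : ℝ) (hδ : 0 < δ) (hδσ : δ ≤ σ) (T : Finset ℕ)
    (hT : IsLowerSet (T : Set ℕ)) (hT₀ : T.Nonempty) :
    (∑ k ∈ T, Real.exp (-2 * (((k : ℝ) + 1 / 2) * δ) ^ 2 / σ ^ 2))
      ≥ (1 / 4) * (((T.filter fun k : ℕ => ((k : ℝ) + 1 / 2) * δ ≤ σ).card : ℝ)
        + ∑ k ∈ T.filter fun k : ℕ => σ < ((k : ℝ) + 1 / 2) * δ,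
            Real.exp (-2 * (((k : ℝ) + 1 / 2) * δ) / σ)) ∧
    (∑ k ∈ T, Real.exp (-2 * (((k : ℝ) + 1 / 2) * δ) ^ 2 / σ ^ 2))
      / (((T.filter fun k : ℕ => ((k : ℝ) + 1 / 2) * δ ≤ σ).card : ℝ)
        + ∑ k ∈ T.filter fun k : ℕ => σ < ((k : ℝ) + 1 / 2) * δ,
            Real.exp (-2 * (((k : ℝ) + 1 / 2) * δ) / σ)) ≥ 1 / 4 := by
  have hmass := card_add_sum_exp_le_four_mul_sum_gaussian hδ hδσ hT
  obtain ⟨k, hk⟩ := hT₀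
  have hzero : 0 ∈ T := hT k.zero_le hk
  have hcard : (0 : ℝ) < (T.filter fun k : ℕ => ((k : ℝ) + 1 / 2) * δ ≤ σ).card :=
    mod_cast card_pos.2 ⟨0, mem_filter.2 ⟨hzero, by push_cast; linarith⟩⟩
  refine ⟨by linarith, ?_⟩
  rw [ge_iff_le, le_div_iff₀ (by positivity)]
  linarith

/-- Success probability for Gaussian state preparation: on the positive half of the
symmetric grid `T = {(k+1/2)·δ : (k+1/2)·δ ≤ 1/2}` with `0 < δ`, `8δ ≤ σ ≤ 1/4`, the
Gaussian target `f(t) = exp(−t²/σ²)` and the reference `g` equal to `1` for `t ≤ σ`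
and `exp(−t/σ)` for `t > σ` satisfy `𝒩_f² ≥ (1/4)·𝒩_g²`; equivalently the success
probability `𝒩_f²/𝒩_g²` is at least `1/4`. -/
theorem stmt7 (δ σ : ℝ) (hδ : 0 < δ) (hδσ : 8 * δ ≤ σ) (hσ : σ ≤ 1 / 4)
    (T : Finset ℕ) (hT : ∀ k : ℕ, k ∈ T ↔ ((k : ℝ) + 1 / 2) * δ ≤ 1 / 2) :
    (∑ k ∈ T, Real.exp (-2 * (((k : ℝ) + 1 / 2) * δ) ^ 2 / σ ^ 2))
      ≥ (1 / 4) * (((T.filter fun k : ℕ => ((k : ℝ) + 1 / 2) * δ ≤ σ).card : ℝ)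
        + ∑ k ∈ T.filter fun k : ℕ => σ < ((k : ℝ) + 1 / 2) * δ,
            Real.exp (-2 * (((k : ℝ) + 1 / 2) * δ) / σ)) ∧
    (∑ k ∈ T, Real.exp (-2 * (((k : ℝ) + 1 / 2) * δ) ^ 2 / σ ^ 2))
      / (((T.filter fun k : ℕ => ((k : ℝ) + 1 / 2) * δ ≤ σ).card : ℝ)
        + ∑ k ∈ T.filter fun k : ℕ => σ < ((k : ℝ) + 1 / 2) * δ,
            Real.exp (-2 * (((k : ℝ) + 1 / 2) * δ) / σ)) ≥ 1 / 4 := by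
  have hlower : IsLowerSet (T : Set ℕ) := fun a b hba ha ↦
    (hT b).2 (antitone_add_half_mul_le hδ.le _ hba ((hT a).1 ha))
  exact stmt7_general δ σ hδ (by linarith) T hlower ⟨0, (hT 0).2 (by push_cast; linarith)⟩
end

section
/- Let N, ν ≥ 1 be integers, S₁,…,S_ν ⊆ Fin N × Fin N pairwise disjoint, g₁,…,g_ν ≥ 0 reals, and d_k, d'_k ≥ 1 integers such that for every k: #{i : (i,j) ∈ S_k} = d_k for every j, and #{j : (i,j) ∈ S_k} = d'_k for every i. Define χ(k,i,j) = (d'_k/d_k)^{1/4}·√(g_k) if (i,j) ∈ S_k and χ(k,i,j) = 0 otherwise; φ(k,j,i) = (d_k/d'_k)^{1/4}·√(g_k) if (i,j) ∈ S_k and φ(k,j,i) = 0 otherwise; and α = Σ_{k=1}^{ν} √(d_k·d'_k)·g_k. Then: (a) for every j, Σ_{k,i} χ(k,i,j)² = α; (b) for every i, Σ_{k,j} φ(k,j,i)² = α; and (c) for every (i,j), Σ_k χ(k,i,j)·φ(k,j,i) = G i j, where G i j := g_k if (i,j) ∈ S_k and G i j := 0 if (i,j) is in no S_k. Hence, when α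 > 0, the defining relation Σ_k χ(k,i,j)·φ(k,j,i)/(𝒩_χ(j)·𝒩_φ(i)) = G i j/α of the block-encoding theorem holds, with 𝒩_χ(j) = 𝒩_φ(i) = √α for all i, j. -/
open scoped BigOperators

/-!
A column of `S k` has `d k` entries and a row has `d' k`, so squaring and summing the amplitude
`(d' k / d k) ^ (1/4) * √(g k)` down a column and its reciprocal counterpart along a row both give
`√(d k * d' k) * g k`. At a single entry the two fourth roots cancel and leave `g k`, and
disjointness of the `S k` lets at most one `k` contribute there.
-/

section

open Finset

/-- The amplitude that the reference data put on a block with `a` entries along the summed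
direction, `b` entries along the other one, and bound `g`: `χ` uses `(a, b) = (d k, d' k)` and `φ`
uses `(a, b) = (d' k, d k)`. At `a = 0`, an empty block, it is `0` because `b / 0 = 0`. -/
noncomputable def blockAmplitude (a b g : ℝ) : ℝ :=
  (b / a) ^ ((1 : ℝ) / 4) * √g

theorem mul_sqrt_div_eq_sqrt_mul {a : ℝ} (ha : 0 ≤ a) (b : ℝ) : a * √(b / a) = √(a * b) := by
  rcases ha.eq_or_lt with rfl | ha
  · simp
  · calc a * √(b / a) = √(a ^ 2) * √(b / a) := by rw [Real.sqrt_sq ha.le]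
      _ = √(a ^ 2 * (b / a)) := (Real.sqrt_mul (sq_nonneg a) _).symm
      _ = √(a * b) := by congr 1; field_simp

theorem mul_blockAmplitude_sq {a b g : ℝ} (ha : 0 ≤ a) (hb : 0 ≤ b) (hg : 0 ≤ g) :
    a * blockAmplitude a b g ^ 2 = √(a * b) * g := by
  have fourth_root_sq : ((b / a) ^ ((1 : ℝ) / 4)) ^ 2 = √(b / a) := by
    rw [← Real.rpow_mul_natCast (div_nonneg hb ha), Real.sqrt_eq_rpow]
    norm_num
  rw [blockAmplitude, mul_pow, fourth_root_sq, Real.sq_sqrt hg, ← mul_assoc,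
    mul_sqrt_div_eq_sqrt_mul ha]

theorem blockAmplitude_mul_blockAmplitude_swap {a b g : ℝ} (ha : 0 < a) (hb : 0 < b)
    (hg : 0 ≤ g) : blockAmplitude a b g * blockAmplitude b a g = g := by
  have fourth_roots_cancel : (b / a) ^ ((1 : ℝ) / 4) * (a / b) ^ ((1 : ℝ) / 4) = 1 := by
    rw [← Real.mul_rpow (by positivity) (by positivity), div_mul_div_cancel₀ ha.ne',
      div_self hb.ne', Real.one_rpow]
  rw [blockAmplitude, blockAmplitude, mul_mul_mul_comm, fourth_roots_cancel,
    Real.mul_self_sqrt hg, one_mul]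

theorem sum_ite_blockAmplitude_sq {ι : Type*} [Fintype ι] (p : ι → Prop) [DecidablePred p]
    {b g : ℝ} (hb : 0 ≤ b) (hg : 0 ≤ g) :
    ∑ x, (if p x then blockAmplitude #{x | p x} b g else 0) ^ 2 = √(#{x | p x} * b) * g := by
  simp only [ite_pow, zero_pow two_ne_zero]
  rw [← sum_filter, sum_const, nsmul_eq_mul, mul_blockAmplitude_sq (Nat.cast_nonneg _) hb hg]

theorem sum_ite_mem_eq_of_pairwise_disjoint {κ ι M : Type*} [Fintype κ] [DecidableEq ι]
    [AddCommMonoid M] {S : κ → Finset ι} (hS : Pairwise fun k l => Disjoint (S k) (S l))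
    {x : ι} {w : κ → M} {y : M} (hmem : ∀ k, x ∈ S k → y = w k)
    (hnot : (∀ k, x ∉ S k) → y = 0) :
    ∑ k, (if x ∈ S k then w k else 0) = y := by
  by_cases hx : ∃ k, x ∈ S k
  · obtain ⟨k, hk⟩ := hx
    have unique_block : ∀ l, l ≠ k → x ∉ S l := fun l hl hxl =>
      disjoint_left.1 (hS hl) hxl hk
    rw [Fintype.sum_eq_single k fun l hl => if_neg (unique_block l hl), if_pos hk, hmem k hk]
  · have hx := not_exists.1 hx
    rw [hnot hx]
    exact sum_eq_zero fun k _ => if_neg (hx k)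

section Counts

variable {m n : Type*} [DecidableEq m] [DecidableEq n]

theorem card_filter_mk_mem_eq_card_filter_snd [Fintype m] (T : Finset (m × n)) (j : n) :
    #{i | (i, j) ∈ T} = #{p ∈ T | p.2 = j} := by
  rw [← card_map (Function.Embedding.sectL m j)]
  congr 1
  ext ⟨i, j'⟩
  simp only [mem_map, mem_filter, mem_univ, true_and, Function.Embedding.sectL_apply]
  grind

theorem card_filter_mk_mem_eq_card_filter_fst [Fintype n] (T : Finset (m × n)) (i : m) :
    #{j | (i, j) ∈ T} = #{p ∈ T | p.1 = i} := by
  rw [← card_map (Function.Embedding.sectR i n)]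
  congr 1
  ext ⟨i', j⟩
  simp only [mem_map, mem_filter, mem_univ, true_and, Function.Embedding.sectR_apply]
  grind

end Counts

theorem stmt14_general {κ m n : Type*} [Fintype κ] [Fintype m] [Fintype n]
    [DecidableEq m] [DecidableEq n]
    {S : κ → Finset (m × n)} (hS : Pairwise fun k l => Disjoint (S k) (S l))
    {g : κ → ℝ} (hg : ∀ k, 0 ≤ g k) {d d' : κ → ℕ}
    (hcol : ∀ k j, #{p ∈ S k | p.2 = j} = d k) (hrow : ∀ k i, #{p ∈ S k | p.1 = i} = d' k)
    {χ : κ → m → n → ℝ} {φ : κ → n → m → ℝ}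
    (hχ : ∀ k i j, χ k i j = if (i, j) ∈ S k then blockAmplitude (d k) (d' k) (g k) else 0)
    (hφ : ∀ k j i, φ k j i = if (i, j) ∈ S k then blockAmplitude (d' k) (d k) (g k) else 0)
    {α : ℝ} (hα : α = ∑ k, √(d k * d' k) * g k) {G : m → n → ℝ}
    (hGmem : ∀ k i j, (i, j) ∈ S k → G i j = g k)
    (hGnot : ∀ i j, (∀ k, (i, j) ∉ S k) → G i j = 0) :
    (∀ j, ∑ k, ∑ i, χ k i j ^ 2 = α) ∧
    (∀ i, ∑ k, ∑ j, φ k j i ^ 2 = α) ∧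
    (∀ i j, ∑ k, χ k i j * φ k j i = G i j) ∧
    (0 < α → ∀ i j,
      ∑ k, χ k i j * φ k j i / (√(∑ k', ∑ i', χ k' i' j ^ 2) * √(∑ k', ∑ j', φ k' j' i ^ 2))
        = G i j / α) := by
  have column_norm : ∀ j, ∑ k, ∑ i, χ k i j ^ 2 = α := fun j => by
    simp only [hα, hχ, ← hcol _ j, ← card_filter_mk_mem_eq_card_filter_snd,
      sum_ite_blockAmplitude_sq _ (Nat.cast_nonneg _) (hg _)]
  have row_norm : ∀ i, ∑ k, ∑ j, φ k j i ^ 2 = α := fun i => by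
    simp only [hα, hφ, ← hrow _ i, ← card_filter_mk_mem_eq_card_filter_fst,
      sum_ite_blockAmplitude_sq _ (Nat.cast_nonneg _) (hg _), mul_comm (d _ : ℝ)]
  have entry_product : ∀ k i j, χ k i j * φ k j i = if (i, j) ∈ S k then g k else 0 := by
    intro k i j
    rw [hχ, hφ]
    split_ifs with hk
    · have hd : 0 < d k := hcol k j ▸ card_pos.2 ⟨(i, j), mem_filter.2 ⟨hk, rfl⟩⟩
      have hd' : 0 < d' k := hrow k i ▸ card_pos.2 ⟨(i, j), mem_filter.2 ⟨hk, rfl⟩⟩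
      exact blockAmplitude_mul_blockAmplitude_swap (Nat.cast_pos.2 hd) (Nat.cast_pos.2 hd') (hg k)
    · exact mul_zero 0
  have overlap : ∀ i j, ∑ k, χ k i j * φ k j i = G i j := fun i j => by
    simp only [entry_product]
    exact sum_ite_mem_eq_of_pairwise_disjoint hS (hGmem · i j) (hGnot i j)
  refine ⟨column_norm, row_norm, overlap, fun hα_pos i j => ?_⟩
  rw [← sum_div, overlap, column_norm, row_norm, Real.mul_self_sqrt hα_pos.le]

end

/-- The matrix-ziggurat reference data satisfy the defining relation of the rejection
sampling block-encoding theorem: with `χ(k,i,j) = (d'_k/d_k)^{1/4}·√(g_k)` and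
`φ(k,j,i) = (d_k/d'_k)^{1/4}·√(g_k)` on `S_k` (zero elsewhere), the normalizations are
`𝒩_χ(j)² = 𝒩_φ(i)² = α = Σ_k √(d_k·d'_k)·g_k`, and
`Σ_k χ(k,i,j)·φ(k,j,i) = G i j`, where `G i j = g_k` for `(i,j) ∈ S_k` and `0`
otherwise; hence `Σ_k χ·φ/(𝒩_χ·𝒩_φ) = G i j/α` when `α > 0`. -/
theorem stmt14 (N ν : ℕ) (hN : 1 ≤ N) (hν : 1 ≤ ν)
    (S : Fin ν → Finset (Fin N × Fin N))
    (hdisj : ∀ k l, k ≠ l → Disjoint (S k) (S l))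
    (g : Fin ν → ℝ) (hg : ∀ k, 0 ≤ g k)
    (d d' : Fin ν → ℕ) (hd : ∀ k, 1 ≤ d k) (hd' : ∀ k, 1 ≤ d' k)
    (hcol : ∀ k j, ((S k).filter fun p => p.2 = j).card = d k)
    (hrow : ∀ k i, ((S k).filter fun p => p.1 = i).card = d' k)
    (χ φ : Fin ν → Fin N → Fin N → ℝ)
    (hχ : ∀ k i j, χ k i j =
      if (i, j) ∈ S k then ((d' k : ℝ) / (d k : ℝ)) ^ ((1 : ℝ) / 4) * Real.sqrt (g k)
      else 0)
    (hφ : ∀ k j i, φ k j i =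
      if (i, j) ∈ S k then ((d k : ℝ) / (d' k : ℝ)) ^ ((1 : ℝ) / 4) * Real.sqrt (g k)
      else 0)
    (α : ℝ) (hα : α = ∑ k, Real.sqrt ((d k : ℝ) * (d' k : ℝ)) * g k)
    (G : Fin N → Fin N → ℝ)
    (hGmem : ∀ k i j, (i, j) ∈ S k → G i j = g k)
    (hGnot : ∀ i j, (∀ k, (i, j) ∉ S k) → G i j = 0) :
    (∀ j, ∑ k, ∑ i, χ k i j ^ 2 = α) ∧
    (∀ i, ∑ k, ∑ j, φ k j i ^ 2 = α) ∧
    (∀ i j, ∑ k, χ k i j * φ k j i = G i j) ∧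
    (0 < α → ∀ i j,
      ∑ k, χ k i j * φ k j i
        / (Real.sqrt (∑ k', ∑ i', χ k' i' j ^ 2)
            * Real.sqrt (∑ k', ∑ j', φ k' j' i ^ 2))
        = G i j / α) :=
  stmt14_general (fun k l => hdisj k l) hg hcol hrow hχ hφ hα hGmem hGnot
end
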